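/- arXiv:1604.00888 — 2 statements merged into one kernel-verified Lean document; each statement's English description precedes it below -/
import Mathlib

section
/- Let G be a finite simple graph with δ(G) ≥ α̃(G), and let P be a path of maximum length in G (no path in G has more vertices than P) with at least 3 vertices. Then the induced subgraph of G on the vertex set of P is Hamiltonian. -/
def SimpleGraph.HasBipartiteHole {V : Type*} (G : SimpleGraph V) (s t : ℕ) : Prop :=
  ∃ S T : Finset V, Disjoint S T ∧ S.card = s ∧ T.card = t ∧
    ∀ a ∈ S, ∀ b ∈ T, ¬ G.Adj a b

noncomputable def SimpleGraph.biHoleNumber {V : Type*} (G : SimpleGraph V) : ℕ :=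
  sInf {r : ℕ | ∃ s t : ℕ, 0 < s ∧ 0 < t ∧ r = s + t - 1 ∧ ¬ G.HasBipartiteHole s t}

namespace SimpleGraph

variable {V : Type*} {G : SimpleGraph V}

/-- A path on at least three vertices whose ends are adjacent makes the subgraph induced on its
vertex set Hamiltonian. -/
lemma Walk.IsPath.isHamiltonian_induce [DecidableEq V] {c d : V} {Q : G.Walk c d} (hQ : Q.IsPath)
    (hdc : G.Adj d c) (hlen : 3 ≤ Q.support.length) {S : Set V} [Fintype S]
    (hS : ∀ x, x ∈ S ↔ x ∈ Q.support) : (G.induce S).IsHamiltonian := by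
  intro _
  let W := Q.induce S fun x hx => (hS x).2 hx
  have hWs : W.support.map Subtype.val = Q.support := by simp [W]
  have hWpath : W.IsPath := by
    rw [Walk.isPath_def] at hQ ⊢
    exact List.Nodup.of_map _ (hWs ▸ hQ)
  have hmem : ∀ w, w ∈ W.support := by
    intro w
    have hw := (hS w).1 w.2
    rw [← hWs, List.mem_map] at hw
    obtain ⟨y, hy, hyw⟩ := hw
    exact Subtype.ext hyw ▸ hy
  refine ⟨_, .cons (show (G.induce S).Adj ⟨d, _⟩ ⟨c, _⟩ from hdc) W,
    Walk.isHamiltonianCycle_isCycle_and_isHamiltonian_tail.2 ⟨?_, ?_⟩⟩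
  · rw [Walk.isCycle_iff_isPath_tail_and_le_length]
    refine ⟨by simpa using hWpath, ?_⟩
    rwa [← hWs, List.length_map, Walk.length_support] at hlen
  · refine Walk.IsPath.isHamiltonian_of_mem (by simpa using hWpath) fun w => by simpa using hmem w

/-- List version of `Walk.IsPath.isHamiltonian_induce`: the list is a permutation of the vertices
indexed by `0, …, n - 1`. -/
lemma isHamiltonian_induce_of_perm_range [DecidableEq V] {v : ℕ → V} {n : ℕ} (hn : 3 ≤ n)
    (hv : Set.InjOn v (Set.Iio n)) {l : List ℕ} (hl : l.Perm (List.range n))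
    (hchain : l.IsChain fun i j => G.Adj (v i) (v j))
    (hclose : ∀ i ∈ l.getLast?, ∀ j ∈ l.head?, G.Adj (v i) (v j)) {S : Set V} [Fintype S]
    (hS : ∀ x, x ∈ S ↔ ∃ i < n, v i = x) : (G.induce S).IsHamiltonian := by
  have hlen : l.length = n := by simpa using hl.length_eq
  have hmem : ∀ i, i ∈ l ↔ i < n := fun i => by simpa using hl.mem_iff (a := i)
  have hne : l ≠ [] := by rintro rfl; simp at hlen; omega
  have hne' : l.map v ≠ [] := by simpa using hne
  have hchain' : (l.map v).IsChain G.Adj := by rwa [List.isChain_map]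
  refine Walk.IsPath.isHamiltonian_induce (Q := Walk.ofSupport (l.map v) hne' hchain') ?_ ?_ ?_ ?_
  · rw [Walk.isPath_def, Walk.support_ofSupport]
    refine List.Nodup.map_on (fun i hi j hj h => hv ((hmem i).1 hi) ((hmem j).1 hj) h) ?_
    exact hl.nodup_iff.2 List.nodup_range
  · rw [List.getLast_map, List.head_map]
    exact hclose _ (List.getLast_mem_getLast? hne) _ (List.head_mem_head? hne)
  · rw [Walk.support_ofSupport, List.length_map, hlen]
    exact hn
  · intro x
    rw [Walk.support_ofSupport, List.mem_map, hS]
    simp only [hmem]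

lemma isChain_range'_of_adj {v : ℕ → V} {n : ℕ} (hadj : ∀ i, i + 1 < n → G.Adj (v i) (v (i + 1)))
    (a k : ℕ) (hak : a + k ≤ n) :
    (List.range' a k).IsChain fun i j => G.Adj (v i) (v j) := by
  rw [List.isChain_iff_getElem]
  intro i hi
  simp only [List.length_range'] at hi
  simpa [add_assoc] using hadj (a + i) (by omega)

lemma range_eq_append_range' {a b n : ℕ} (hab : a ≤ b) (hbn : b ≤ n) :
    List.range n = List.range' 0 a ++ (List.range' a (b - a) ++ List.range' b (n - b)) := by
  have h₁ := List.range'_append_1 (s := a) (m := b - a) (n := n - b)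
  have h₂ := List.range'_append_1 (s := 0) (m := a) (n := n - a)
  rw [show a + (b - a) = b by omega, show b - a + (n - b) = n - a by omega] at h₁
  rw [zero_add, show a + (n - a) = n by omega] at h₂
  rw [h₁, h₂, List.range_eq_range']

/-- Rotating a path `v 0, …, v (n - 1)` along the chords `{0, i}`, `{j, n - 1}` and
`{i - 1, j + 1}` with `i ≤ j` closes it to a cycle. -/
lemma isHamiltonian_induce_of_adj_of_adj_of_le [DecidableEq V] {v : ℕ → V} {n : ℕ} (hn : 3 ≤ n)
    (hv : Set.InjOn v (Set.Iio n)) (hadj : ∀ i, i + 1 < n → G.Adj (v i) (v (i + 1)))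
    {i j : ℕ} (hi : 0 < i) (hij : i ≤ j) (hj : j + 1 < n) (h0 : G.Adj (v 0) (v i))
    (hl : G.Adj (v (n - 1)) (v j)) (hc : G.Adj (v (i - 1)) (v (j + 1))) {S : Set V} [Fintype S]
    (hS : ∀ x, x ∈ S ↔ ∃ i < n, v i = x) : (G.induce S).IsHamiltonian := by
  refine isHamiltonian_induce_of_perm_range hn hv
    (l := List.range' 0 i ++ (List.range' (j + 1) (n - 1 - j) ++
      (List.range' i (j + 1 - i)).reverse)) ?_ ?_ ?_ hS
  · rw [range_eq_append_range' (a := i) (b := j + 1) (by omega) (by omega),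
      show n - (j + 1) = n - 1 - j by omega]
    exact (List.perm_append_comm.trans ((List.reverse_perm _).append_right _)).append_left _
  · simp only [List.isChain_append, List.isChain_reverse]
    refine ⟨isChain_range'_of_adj hadj _ _ (by omega),
      ⟨isChain_range'_of_adj hadj _ _ (by omega), ?_, ?_⟩, ?_⟩
    · simpa only [G.adj_comm] using isChain_range'_of_adj hadj _ _ (by omega)
    · intro x hx y hy
      simp [List.getLast?_range'] at hx hy
      obtain ⟨rfl, rfl⟩ : x = n - 1 ∧ y = j := by omega
      exact hl
    · intro x hx y hy
      simp [List.getLast?_range', List.head?_range'] at hx hy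
      obtain ⟨rfl, rfl⟩ : x = i - 1 ∧ y = j + 1 := by omega
      exact hc
  · intro x hx y hy
    simp [List.getLast?_range', List.head?_range'] at hx hy
    obtain ⟨rfl, rfl⟩ : x = i ∧ y = 0 := by omega
    exact h0.symm

/-- Rotating a path `v 0, …, v (n - 1)` along the chords `{0, i}`, `{j, n - 1}` and
`{j + 1, i + 1}` with `j < i` closes it to a cycle. -/
lemma isHamiltonian_induce_of_adj_of_adj_of_lt [DecidableEq V] {v : ℕ → V} {n : ℕ} (hn : 3 ≤ n)
    (hv : Set.InjOn v (Set.Iio n)) (hadj : ∀ i, i + 1 < n → G.Adj (v i) (v (i + 1)))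
    {i j : ℕ} (hji : j < i) (hi : i + 1 < n) (h0 : G.Adj (v 0) (v i))
    (hl : G.Adj (v (n - 1)) (v j)) (hc : G.Adj (v (j + 1)) (v (i + 1))) {S : Set V} [Fintype S]
    (hS : ∀ x, x ∈ S ↔ ∃ i < n, v i = x) : (G.induce S).IsHamiltonian := by
  refine isHamiltonian_induce_of_perm_range hn hv
    (l := List.range' 0 (j + 1) ++ ((List.range' (i + 1) (n - 1 - i)).reverse ++
      List.range' (j + 1) (i - j))) ?_ ?_ ?_ hS
  · rw [range_eq_append_range' (a := j + 1) (b := i + 1) (by omega) (by omega),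
      show n - (i + 1) = n - 1 - i by omega, show i + 1 - (j + 1) = i - j by omega]
    exact (((List.reverse_perm _).append_right _).trans List.perm_append_comm).append_left _
  · simp only [List.isChain_append, List.isChain_reverse]
    refine ⟨isChain_range'_of_adj hadj _ _ (by omega),
      ⟨?_, isChain_range'_of_adj hadj _ _ (by omega), ?_⟩, ?_⟩
    · simpa only [G.adj_comm] using isChain_range'_of_adj hadj _ _ (by omega)
    · intro x hx y hy
      simp [List.head?_range'] at hx hy
      obtain ⟨rfl, rfl⟩ : x = i + 1 ∧ y = j + 1 := by omega
      exact hc.symm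
    · intro x hx y hy
      simp [List.getLast?_range', List.head?_range'] at hx hy
      obtain ⟨rfl, rfl⟩ : x = j ∧ y = n - 1 := by omega
      exact hl.symm
  · intro x hx y hy
    simp [List.getLast?_range', List.head?_range'] at hx hy
    rw [if_neg (by omega), Option.getD_some] at hx
    obtain ⟨rfl, rfl⟩ : x = i ∧ y = 0 := by omega
    exact h0.symm

lemma exists_not_hasBipartiteHole [Fintype V] (G : SimpleGraph V) :
    ∃ s t : ℕ, 0 < s ∧ 0 < t ∧ G.biHoleNumber = s + t - 1 ∧ ¬ G.HasBipartiteHole s t := by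
  refine Nat.sInf_mem
    (s := {r : ℕ | ∃ s t : ℕ, 0 < s ∧ 0 < t ∧ r = s + t - 1 ∧ ¬ G.HasBipartiteHole s t})
    ⟨_, Fintype.card V + 1, 1, by omega, by omega, rfl, ?_⟩
  rintro ⟨S, -, -, hS, -⟩
  have := S.card_le_univ
  omega

lemma hasBipartiteHole_of_le_card {s t : ℕ} {I J : Finset ℕ} {f g : ℕ → V}
    (hf : Set.InjOn f I) (hg : Set.InjOn g J) (hI : s ≤ I.card) (hJ : t ≤ J.card)
    (hne : ∀ i ∈ I, ∀ j ∈ J, f i ≠ g j) (hadj : ∀ i ∈ I, ∀ j ∈ J, ¬ G.Adj (f i) (g j)) :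
    G.HasBipartiteHole s t := by
  classical
  obtain ⟨I', hI', rfl⟩ := Finset.exists_subset_card_eq hI
  obtain ⟨J', hJ', rfl⟩ := Finset.exists_subset_card_eq hJ
  refine ⟨I'.image f, J'.image g, ?_, Finset.card_image_of_injOn (hf.mono (by simpa using hI')),
    Finset.card_image_of_injOn (hg.mono (by simpa using hJ')), ?_⟩
  · simp only [Finset.disjoint_left, Finset.mem_image]
    rintro _ ⟨i, hi, rfl⟩ ⟨j, hj, hij⟩
    exact hne i (hI' hi) j (hJ' hj) hij.symm
  · simp only [Finset.mem_image]
    rintro _ ⟨i, hi, rfl⟩ _ ⟨j, hj, rfl⟩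
    exact hadj i (hI' hi) j (hJ' hj)

/-- Two sets of at least `s + t - 1` numbers can be separated by a threshold `k` in one of two
ways. -/
lemma exists_threshold {s t : ℕ} (hs : 0 < s) (ht : 0 < t) {X Y : Finset ℕ}
    (hX : s + t - 1 ≤ X.card) (hY : s + t - 1 ≤ Y.card) :
    ∃ k, (s ≤ (X.filter (· ≤ k)).card ∧ t ≤ (Y.filter (k ≤ ·)).card) ∨
      (s ≤ (Y.filter (· < k)).card ∧ t ≤ (X.filter (k ≤ ·)).card) := by
  have hex : ∃ k, s ≤ (X.filter (· ≤ k)).card := by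
    refine ⟨X.sup id, ?_⟩
    rw [Finset.filter_true_of_mem fun x hx => show x ≤ _ from Finset.le_sup (f := id) hx]
    omega
  classical
  have hk := Nat.find_spec hex
  have hmin : (X.filter (· < Nat.find hex)).card < s := by
    rcases hk0 : Nat.find hex with _ | m
    · simpa using hs
    · have := Nat.find_min hex (m := m) (by omega)
      simpa [Nat.lt_succ_iff] using this
  refine ⟨Nat.find hex, ?_⟩
  have hXs := X.card_filter_add_card_filter_not (· < Nat.find hex)
  have hYs := Y.card_filter_add_card_filter_not (· < Nat.find hex)
  simp only [not_lt] at hXs hYs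
  by_cases hYk : t ≤ (Y.filter (Nat.find hex ≤ ·)).card
  · exact .inl ⟨hk, hYk⟩
  · exact .inr (by omega)

/-- If all neighbors of `u` occur among `v 0, …, v (n - 1)`, at least `δ(G)` positions carry a
neighbor of `u`. -/
lemma minDegree_le_card_filter [Fintype V] [DecidableRel G.Adj] {v : ℕ → V} {n : ℕ} {u : V}
    (hu : ∀ w, G.Adj u w → ∃ i < n, v i = w) :
    G.minDegree ≤ ((Finset.range n).filter fun i => G.Adj u (v i)).card := by
  classical
  refine (G.minDegree_le_degree u).trans ?_
  rw [← G.card_neighborFinset_eq_degree]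
  refine le_trans (Finset.card_le_card ?_) (Finset.card_image_le (f := v))
  intro w hw
  rw [mem_neighborFinset] at hw
  obtain ⟨i, hi, rfl⟩ := hu w hw
  exact Finset.mem_image_of_mem v (by simpa using ⟨hi, hw⟩)

/-- All neighbors of the first vertex of a longest path lie on the path. -/
lemma Walk.IsPath.mem_support_of_adj_of_forall_le {a b : V} {P : G.Walk a b} (hP : P.IsPath)
    (hmax : ∀ (c d : V) (Q : G.Walk c d), Q.IsPath → Q.support.length ≤ P.support.length)
    {w : V} (hw : G.Adj a w) : w ∈ P.support := by
  by_contra hmem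
  have := hmax _ _ (.cons hw.symm P) (hP.cons hmem)
  simp at this

end SimpleGraph

open SimpleGraph

/-- If `δ(G) ≥ α̃(G)` and `P` is a maximum-length path in `G` with at least 3 vertices,
then the induced subgraph of `G` on the vertex set of `P` is Hamiltonian. -/
theorem induced_on_max_path_hamiltonian
    {V : Type*} [Fintype V] [DecidableEq V] (G : SimpleGraph V) [DecidableRel G.Adj]
    (h : G.biHoleNumber ≤ G.minDegree)
    {a b : V} (P : G.Walk a b) (hP : P.IsPath)
    (hmax : ∀ (c d : V) (Q : G.Walk c d), Q.IsPath → Q.support.length ≤ P.support.length)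
    (h3 : 3 ≤ P.support.length) :
    (G.induce {x | x ∈ P.support}).IsHamiltonian := by

  set n := P.support.length with hn
  have hnl : n = P.length + 1 := P.length_support
  set v := P.getVert
  have hv0 : v 0 = a := P.getVert_zero
  have hvn : v (n - 1) = b := by simp [v, hnl]
  have hmem : ∀ x, x ∈ P.support ↔ ∃ i < n, v i = x := by
    intro x
    rw [Walk.mem_support_iff_exists_getVert]
    constructor
    · rintro ⟨i, hi, hin⟩; exact ⟨i, by omega, hi⟩
    · rintro ⟨i, hi, hin⟩; exact ⟨i, hin, by omega⟩
  have hv : Set.InjOn v (Set.Iio n) := hP.getVert_injOn.mono fun i hi => by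
    have : i < n := hi
    change i ≤ P.length
    omega
  have hadj : ∀ i, i + 1 < n → G.Adj (v i) (v (i + 1)) := fun i hi =>
    P.adj_getVert_succ (by omega)
  by_cases hab : G.Adj b a
  · exact hP.isHamiltonian_induce hab h3 fun x => Iff.rfl
  by_contra hH
  obtain ⟨s, t, hs, ht, hst, hhole⟩ := G.exists_not_hasBipartiteHole
  rw [hst] at h
  have hX : s + t - 1 ≤ ((Finset.range n).filter fun i => G.Adj a (v i)).card :=
    h.trans (minDegree_le_card_filter fun w hw =>
      (hmem w).1 (hP.mem_support_of_adj_of_forall_le hmax hw))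
  have hY : s + t - 1 ≤ ((Finset.range n).filter fun i => G.Adj b (v i)).card := by
    refine h.trans (minDegree_le_card_filter fun w hw => (hmem w).1 ?_)
    have := hP.reverse.mem_support_of_adj_of_forall_le
      (by rwa [Walk.support_reverse, List.length_reverse]) hw
    simpa using this
  have hXpos : ∀ i, i < n → G.Adj a (v i) → 0 < i ∧ i + 1 < n := by
    intro i hi hai
    refine ⟨Nat.pos_of_ne_zero ?_, ?_⟩
    · rintro rfl; exact G.irrefl (hv0 ▸ hai)
    · by_contra hin
      obtain rfl : i = n - 1 := by omega
      exact hab (hvn ▸ hai).symm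
  have hYpos : ∀ j, j < n → G.Adj b (v j) → j + 1 < n := by
    intro j hj hbj
    by_contra hjn
    obtain rfl : j = n - 1 := by omega
    exact G.irrefl (hvn ▸ hbj)
  obtain ⟨k, ⟨h₁, h₂⟩ | ⟨h₁, h₂⟩⟩ := exists_threshold hs ht hX hY
  · refine hhole (hasBipartiteHole_of_le_card (f := fun i => v (i - 1)) (g := fun j => v (j + 1))
      ?_ ?_ h₁ h₂ ?_ ?_)
    · intro x hx y hy hxy
      simp only [Finset.coe_filter, Finset.mem_filter, Finset.mem_range, Set.mem_ofPred_eq] at hx hy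
      have := hXpos x hx.1.1 hx.1.2
      have := hXpos y hy.1.1 hy.1.2
      have := hv (show x - 1 < n by omega) (show y - 1 < n by omega) hxy
      omega
    · intro x hx y hy hxy
      simp only [Finset.coe_filter, Finset.mem_filter, Finset.mem_range, Set.mem_ofPred_eq] at hx hy
      have := hv (hYpos x hx.1.1 hx.1.2) (hYpos y hy.1.1 hy.1.2) hxy
      omega
    · intro i hi j hj hij
      simp only [Finset.mem_filter, Finset.mem_range] at hi hj
      have := hv (show i - 1 < n by omega) (hYpos j hj.1.1 hj.1.2) hij
      omega
    · intro i hi j hj hij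
      simp only [Finset.mem_filter, Finset.mem_range] at hi hj
      exact hH (isHamiltonian_induce_of_adj_of_adj_of_le h3 hv hadj (hXpos i hi.1.1 hi.1.2).1
        (hi.2.trans hj.2) (hYpos j hj.1.1 hj.1.2) (hv0 ▸ hi.1.2) (hvn ▸ hj.1.2) hij hmem)
  · refine hhole (hasBipartiteHole_of_le_card (f := fun j => v (j + 1)) (g := fun i => v (i + 1))
      ?_ ?_ h₁ h₂ ?_ ?_)
    · intro x hx y hy hxy
      simp only [Finset.coe_filter, Finset.mem_filter, Finset.mem_range, Set.mem_ofPred_eq] at hx hy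
      have := hv (hYpos x hx.1.1 hx.1.2) (hYpos y hy.1.1 hy.1.2) hxy
      omega
    · intro x hx y hy hxy
      simp only [Finset.coe_filter, Finset.mem_filter, Finset.mem_range, Set.mem_ofPred_eq] at hx hy
      have := hv (hXpos x hx.1.1 hx.1.2).2 (hXpos y hy.1.1 hy.1.2).2 hxy
      omega
    · intro j hj i hi hij
      simp only [Finset.mem_filter, Finset.mem_range] at hi hj
      have := hv (hYpos j hj.1.1 hj.1.2) (hXpos i hi.1.1 hi.1.2).2 hij
      omega
    · intro j hj i hi hij
      simp only [Finset.mem_filter, Finset.mem_range] at hi hj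
      exact hH (isHamiltonian_induce_of_adj_of_adj_of_lt h3 hv hadj (hj.2.trans_le hi.2)
        (hXpos i hi.1.1 hi.1.2).2 (hv0 ▸ hi.1.2) (hvn ▸ hj.1.2) hij hmem)
end

section
/- Let G be a finite simple graph and let k be a positive integer. Let G' be the disjoint union of G and the complete bipartite graph K_{k−1,2k}, and let G^φ be the complement of G'. Then G contains a copy of K_{k,k} (that is, there exist disjoint vertex sets A and B in G with |A| = |B| = k such that every vertex of A is adjacent to every vertex of B) if and only if α̃(G^φ) ≥ 2k. -/
namespace SimpleGraph

variable {V W : Type*}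

theorem HasBipartiteHole.symm {G : SimpleGraph V} {s t : ℕ} (h : G.HasBipartiteHole s t) :
    G.HasBipartiteHole t s := by
  obtain ⟨S, T, hd, hS, hT, h⟩ := h
  exact ⟨T, S, hd.symm, hT, hS, fun a ha b hb hab => h b hb a ha hab.symm⟩

theorem HasBipartiteHole.mono {G : SimpleGraph V} {s t s' t' : ℕ}
    (h : G.HasBipartiteHole s t) (hs : s' ≤ s) (ht : t' ≤ t) : G.HasBipartiteHole s' t' := by
  obtain ⟨S, T, hd, rfl, rfl, h⟩ := h
  obtain ⟨S', hS', rfl⟩ := Finset.exists_subset_card_eq hs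
  obtain ⟨T', hT', rfl⟩ := Finset.exists_subset_card_eq ht
  exact ⟨S', T', hd.mono hS' hT', rfl, rfl, fun a ha b hb => h a (hS' ha) b (hT' hb)⟩

theorem hasBipartiteHole_compl_iff {G : SimpleGraph V} {s t : ℕ} :
    Gᶜ.HasBipartiteHole s t ↔ ∃ A B : Finset V, Disjoint A B ∧ A.card = s ∧ B.card = t ∧
      ∀ a ∈ A, ∀ b ∈ B, G.Adj a b := by
  refine exists₂_congr fun A B => and_congr_right fun hd => and_congr_right fun _ =>
    and_congr_right fun _ => forall₂_congr fun a ha => forall₂_congr fun b hb => ?_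
  have hab : a ≠ b := fun h => Finset.disjoint_left.mp hd ha (h ▸ hb)
  simp [compl_adj, hab]

theorem HasBipartiteHole.compl_of_embedding {G : SimpleGraph V} {H : SimpleGraph W} {s t : ℕ}
    (h : Gᶜ.HasBipartiteHole s t) (f : G ↪g H) : Hᶜ.HasBipartiteHole s t := by
  rw [hasBipartiteHole_compl_iff] at h ⊢
  obtain ⟨A, B, hd, hA, hB, h⟩ := h
  refine ⟨A.map f.toEmbedding, B.map f.toEmbedding, (Finset.disjoint_map _).mpr hd,
    by simpa using hA, by simpa using hB, ?_⟩
  simpa using h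

theorem le_biHoleNumber_iff [Finite V] {G : SimpleGraph V} {n : ℕ} :
    n ≤ G.biHoleNumber ↔ ∀ s t : ℕ, 0 < s → 0 < t → s + t ≤ n → G.HasBipartiteHole s t := by
  constructor
  · intro h s t hs ht hst
    by_contra hole
    have : G.biHoleNumber ≤ s + t - 1 := Nat.sInf_le ⟨s, t, hs, ht, rfl, hole⟩
    omega
  · intro h
    refine le_csInf ⟨_, Nat.card V + 1, 1, by omega, by omega, rfl, ?_⟩ ?_
    · rintro ⟨S, -, -, hS, -⟩
      have := Finite.card_subtype_le (· ∈ S)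
      simp only [Nat.card_eq_fintype_card, Fintype.card_coe] at this
      omega
    · rintro _ ⟨s, t, hs, ht, rfl, hole⟩
      by_contra hlt
      exact hole (h s t hs ht (by omega))

theorem hasBipartiteHole_compl_completeBipartiteGraph (m n : ℕ) :
    (completeBipartiteGraph (Fin m) (Fin n))ᶜ.HasBipartiteHole m n := by
  rw [hasBipartiteHole_compl_iff]
  refine ⟨Finset.univ.map .inl, Finset.univ.map .inr, ?_, by simp, by simp, by simp⟩
  simp [Finset.disjoint_left]

theorem not_hasBipartiteHole_compl_completeBipartiteGraph {m n s t : ℕ} (hs : m < s)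
    (ht : m < t) : ¬ (completeBipartiteGraph (Fin m) (Fin n))ᶜ.HasBipartiteHole s t := by
  rw [hasBipartiteHole_compl_iff]
  rintro ⟨A, B, -, hA, hB, h⟩
  have card_le : ∀ C : Finset (Fin m ⊕ Fin n), (∀ c ∈ C, c.isLeft) → C.card ≤ m := by
    intro C hC
    have : C ⊆ Finset.univ.map .inl := by
      intro c hc
      obtain ⟨x, rfl⟩ := Sum.isLeft_iff.mp (hC c hc)
      simp
    simpa using Finset.card_le_card this
  obtain ⟨a, ha⟩ : A.Nonempty := Finset.card_pos.mp (by omega)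
  obtain ⟨b, hb⟩ : B.Nonempty := Finset.card_pos.mp (by omega)
  have hab := h a ha b hb
  rw [completeBipartiteGraph_adj] at hab
  rcases hab with ⟨-, hbr⟩ | ⟨har, -⟩
  · have := card_le A fun c hc => by
      have := h c hc b hb
      cases c <;> cases b <;> simp_all
    omega
  · have := card_le B fun c hc => by
      have := h a ha c hc
      cases c <;> cases a <;> simp_all
    omega

theorem hasBipartiteHole_compl_sum {G : SimpleGraph V} {H : SimpleGraph W} {s t : ℕ}
    (hs : 0 < s) (ht : 0 < t) (h : (G ⊕g H)ᶜ.HasBipartiteHole s t) :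
    Gᶜ.HasBipartiteHole s t ∨ Hᶜ.HasBipartiteHole s t := by
  simp only [hasBipartiteHole_compl_iff] at h ⊢
  obtain ⟨A, B, hd, rfl, rfl, h⟩ := h
  obtain ⟨a, ha⟩ := Finset.card_pos.mp hs
  obtain ⟨b, hb⟩ := Finset.card_pos.mp ht
  rcases a with a | a
  · have hB : ∀ y ∈ B, y.isLeft := fun y hy => by
      have := h _ ha y hy
      cases y <;> simp_all
    have hA : ∀ x ∈ A, x.isLeft := fun x hx => by
      have := h x hx b hb
      have := hB b hb
      cases x <;> cases b <;> simp_all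
    have eq_map : ∀ C : Finset (V ⊕ W), (∀ c ∈ C, c.isLeft) → C.toLeft.map .inl = C := by
      intro C hC
      ext (x | x)
      · simp
      · simpa using fun hx => by simpa using hC _ hx
    left
    rw [← eq_map A hA, ← eq_map B hB] at hd h ⊢
    refine ⟨A.toLeft, B.toLeft, (Finset.disjoint_map _).mp hd, by simp, by simp, ?_⟩
    simpa using h
  · have hB : ∀ y ∈ B, y.isRight := fun y hy => by
      have := h _ ha y hy
      cases y <;> simp_all
    have hA : ∀ x ∈ A, x.isRight := fun x hx => by
      have := h x hx b hb
      have := hB b hb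
      cases x <;> cases b <;> simp_all
    have eq_map : ∀ C : Finset (V ⊕ W), (∀ c ∈ C, c.isRight) → C.toRight.map .inr = C := by
      intro C hC
      ext (x | x)
      · simpa using fun hx => by simpa using hC _ hx
      · simp
    right
    rw [← eq_map A hA, ← eq_map B hB] at hd h ⊢
    refine ⟨A.toRight, B.toRight, (Finset.disjoint_map _).mp hd, by simp, by simp, ?_⟩
    simpa using h

end SimpleGraph

/-- `G` contains a copy of `K_{k,k}` iff the complement of the disjoint union of `G`
with `K_{k-1,2k}` has bipartite-hole-number at least `2k`. -/
theorem kkk_subgraph_iff_biHoleNumber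
    {V : Type*} [Fintype V] [DecidableEq V] (G : SimpleGraph V) (k : ℕ) (hk : 1 ≤ k) :
    (∃ A B : Finset V, Disjoint A B ∧ A.card = k ∧ B.card = k ∧
        ∀ a ∈ A, ∀ b ∈ B, G.Adj a b) ↔
      2 * k ≤ (G ⊕g completeBipartiteGraph (Fin (k - 1)) (Fin (2 * k)))ᶜ.biHoleNumber := by
  rw [← SimpleGraph.hasBipartiteHole_compl_iff, SimpleGraph.le_biHoleNumber_iff]
  constructor
  · intro h s t hs ht hst
    have hG := h.compl_of_embedding (SimpleGraph.Embedding.sumInl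
      (G := G) (H := completeBipartiteGraph (Fin (k - 1)) (Fin (2 * k))))
    have hK := (SimpleGraph.hasBipartiteHole_compl_completeBipartiteGraph
      (k - 1) (2 * k)).compl_of_embedding
      (SimpleGraph.Embedding.sumInr (G := G))
    rcases lt_or_ge s k with hsk | hsk
    · exact hK.mono (by omega) (by omega)
    · rcases lt_or_ge t k with htk | htk
      · exact hK.symm.mono (by omega) (by omega)
      · exact hG.mono (by omega) (by omega)
  · intro h
    refine (SimpleGraph.hasBipartiteHole_compl_sum hk hk
      (h k k hk hk (by omega))).resolve_right ?_
    exact SimpleGraph.not_hasBipartiteHole_compl_completeBipartiteGraph (by omega) (by omega)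
end
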